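/- Let Z ⊆ Σ₂ be a nonempty compact σ-invariant set and z ∈ Z with dense orbit. If φ(z_i, i) = 1 and φ(1−z_i, i) = 0 for all i ∈ ℤ, then for every ergodic σ-invariant measure μ on Σ₂, Λ(φ, μ) = 1 − inf{ d̄(μ, ν) : ν ergodic, ν(Z) = 1 }. -/

import Mathlib

open MeasureTheory Filter

noncomputable section

/-- The full two-sided shift space on two symbols. -/
abbrev Sig := ℤ → Bool

/-- The two-sided shift map. -/
def shift : Sig → Sig := fun x i => x (i + 1)

/-- `birk φ n x = sup_{k ∈ ℤ} Σ_{i=0}^{n-1} φ(x_i, i+k)`, which equals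
`log ‖L^φ_{x_{n-1}} ⋯ L^φ_{x_0}‖` for the associated weighted shift operators. -/
def birk (φ : Bool → ℤ → ℝ) (n : ℕ) (x : Sig) : ℝ :=
  ⨆ k : ℤ, ∑ i ∈ Finset.range n, φ (x (i : ℤ)) ((i : ℤ) + k)

/-- The top Lyapunov exponent `Λ(φ,μ) = inf_{n ≥ 1} (1/n) ∫ birk φ n dμ`
(the limit exists and equals this infimum by subadditivity). -/
def Lam (φ : Bool → ℤ → ℝ) (μ : Measure Sig) : ℝ :=
  ⨅ n : ℕ, ((n : ℝ) + 1)⁻¹ * ∫ x, birk φ (n + 1) x ∂μ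

/-- `log ϱ(L₀^φ, L₁^φ) = inf_{n ≥ 1} (1/n) sup_{x} birk φ n x`. -/
def logSpr (φ : Bool → ℤ → ℝ) : ℝ :=
  ⨅ n : ℕ, ((n : ℝ) + 1)⁻¹ * ⨆ x : Sig, birk φ (n + 1) x

/-- The Ornstein `d̄`-metric: `d̄(μ,ν)` is the infimum over `(σ×σ)`-invariant joinings `m`
of `μ` and `ν` of `m {(x,y) : x₀ ≠ y₀}`. -/
def dbar (μ ν : Measure Sig) : ℝ :=
  sInf {r : ℝ | ∃ m : Measure (Sig × Sig),
    IsProbabilityMeasure m ∧ m.map (Prod.map shift shift) = m ∧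
    m.map Prod.fst = μ ∧ m.map Prod.snd = ν ∧
    r = (m {p : Sig × Sig | p.1 0 ≠ p.2 0}).toReal}

open scoped Topology ENNReal

abbrev Sig2 := Sig × Sig

/-- The product shift. -/
abbrev TT : Sig2 → Sig2 := Prod.map shift shift

/-- The agreement set at coordinate `i`. -/
def agree (i : ℤ) : Set Sig2 := {p | p.1 i = p.2 i}

lemma continuous_shift : Continuous shift := by
  unfold shift; fun_prop

lemma continuous_TT : Continuous TT := continuous_shift.prodMap continuous_shift

lemma agree_clopen (i : ℤ) : IsClopen (agree i) := by
  have h : agree i = (fun p : Sig2 => (p.1 i, p.2 i)) ⁻¹' {q : Bool × Bool | q.1 = q.2} := rfl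
  rw [h]
  exact (isClopen_discrete _).preimage (by fun_prop)

lemma shift_iter (n : ℕ) (x : Sig) (j : ℤ) : shift^[n] x j = x (j + n) := by
  induction n generalizing x with
  | zero => simp
  | succ n ih =>
    rw [Function.iterate_succ_apply, ih]
    simp only [shift]; congr 1; push_cast; ring

lemma TT_iter (n : ℕ) (p : Sig2) : TT^[n] p = (shift^[n] p.1, shift^[n] p.2) := by
  simp only [TT, Prod.map_iterate]; rfl

lemma TT_iter_preimage_agree (n : ℕ) : TT^[n] ⁻¹' agree 0 = agree n := by
  ext p
  simp [agree, shift_iter]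

lemma ext_clopen {Y : Type*} [TopologicalSpace Y] [CompactSpace Y] [T2Space Y]
    [TotallyDisconnectedSpace Y] [SecondCountableTopology Y] [MeasurableSpace Y] [BorelSpace Y]
    (m m' : Measure Y) [IsProbabilityMeasure m] [IsProbabilityMeasure m']
    (h : ∀ C : Set Y, IsClopen C → m.real C = m'.real C) : m = m' := by
  refine MeasureTheory.ext_of_generate_finite {s : Set Y | IsClopen s} ?_ ?_ ?_ (by simp)
  · rw [BorelSpace.measurable_eq (α := Y)]
    exact isTopologicalBasis_isClopen.borel_eq_generateFrom
  · intro s hs t ht _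
    exact hs.inter ht
  · intro s hs
    have := h s hs
    rwa [measureReal_def, measureReal_def, ENNReal.toReal_eq_toReal_iff' (by simp) (by simp)] at this

lemma clopen_cont {Y : Type*} [TopologicalSpace Y] [MeasurableSpace Y] [BorelSpace Y]
    [HasOuterApproxClosed Y] {C : Set Y} (hC : IsClopen C) :
    Continuous fun m : ProbabilityMeasure Y => (m : Measure Y).real C := by
  rw [continuous_iff_continuousAt]
  intro m
  have := ProbabilityMeasure.tendsto_measure_of_isClopen_of_tendsto (L := 𝓝 m) (μ := m) (μs := id)
    tendsto_id hC
  exact (NNReal.continuous_coe.tendsto _).comp this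

/-- Joinings of `μ` with measures on `Z`. -/
def KK (μ : Measure Sig) (Z : Set Sig) : Set (ProbabilityMeasure Sig2) :=
  {m | (∀ C : Set Sig, IsClopen C → (m : Measure Sig2).real (Prod.fst ⁻¹' C) = μ.real C) ∧
    (∀ C : Set Sig2, IsClopen C → (m : Measure Sig2).real (TT ⁻¹' C) = (m : Measure Sig2).real C) ∧
    (∀ C : Set Sig, IsClopen C → C ⊆ Zᶜ → (m : Measure Sig2).real (Prod.snd ⁻¹' C) = 0)}

lemma KK_compact (μ : Measure Sig) (Z : Set Sig) : IsCompact (KK μ Z) := by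
  apply IsClosed.isCompact
  have h : KK μ Z =
    (⋂ (C : Set Sig) (_ : IsClopen C),
      {m : ProbabilityMeasure Sig2 |
        (m : Measure Sig2).real (Prod.fst ⁻¹' C) = μ.real C}) ∩
    ((⋂ (C : Set Sig2) (_ : IsClopen C),
      {m : ProbabilityMeasure Sig2 | (m : Measure Sig2).real (TT ⁻¹' C) = (m : Measure Sig2).real C}) ∩
    (⋂ (C : Set Sig) (_ : IsClopen C) (_ : C ⊆ Zᶜ),
      {m : ProbabilityMeasure Sig2 | (m : Measure Sig2).real (Prod.snd ⁻¹' C) = 0})) := by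
    ext m
    simp only [KK, Set.mem_ofPred_eq, Set.mem_inter_iff, Set.mem_iInter]
  rw [h]
  refine IsClosed.inter ?_ (IsClosed.inter ?_ ?_)
  · exact isClosed_iInter fun C => isClosed_iInter fun hC =>
      isClosed_eq (clopen_cont (hC.preimage continuous_fst)) continuous_const
  · exact isClosed_iInter fun C => isClosed_iInter fun hC =>
      isClosed_eq (clopen_cont (hC.preimage continuous_TT)) (clopen_cont hC)
  · exact isClosed_iInter fun C => isClosed_iInter fun hC => isClosed_iInter fun _ =>
      isClosed_eq (clopen_cont (hC.preimage continuous_snd)) continuous_const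

lemma mem_KK {μ : Measure Sig} [IsProbabilityMeasure μ] {Z : Set Sig} (hZ : IsClosed Z)
    {m : ProbabilityMeasure Sig2} :
    m ∈ KK μ Z ↔ (m : Measure Sig2).map Prod.fst = μ ∧ (m : Measure Sig2).map TT = m ∧
      (m : Measure Sig2) (Prod.snd ⁻¹' Zᶜ) = 0 := by
  unfold KK
  simp only [Set.mem_ofPred_eq]
  have i1 : IsProbabilityMeasure ((m : Measure Sig2).map Prod.fst) :=
    Measure.isProbabilityMeasure_map (by fun_prop)
  have i2 : IsProbabilityMeasure ((m : Measure Sig2).map TT) :=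
    Measure.isProbabilityMeasure_map continuous_TT.measurable.aemeasurable
  refine and_congr ?_ (and_congr ?_ ?_)
  · constructor
    · intro h
      refine ext_clopen _ _ fun C hC => ?_
      rw [map_measureReal_apply measurable_fst hC.isOpen.measurableSet, h C hC]
    · intro h C hC
      rw [← map_measureReal_apply measurable_fst hC.isOpen.measurableSet, h]
  · constructor
    · intro h
      refine ext_clopen _ _ fun C hC => ?_
      rw [map_measureReal_apply continuous_TT.measurable hC.isOpen.measurableSet, h C hC]
    · intro h C hC
      rw [← map_measureReal_apply continuous_TT.measurable hC.isOpen.measurableSet, h]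
  · constructor
    · intro h
      obtain ⟨S, hS, hS'⟩ := (isTopologicalBasis_isClopen (X := Sig)).open_eq_sUnion hZ.isOpen_compl
      have hc : Countable (TopologicalSpace.Clopens Sig) :=
        TopologicalSpace.Clopens.countable_iff_secondCountable.2 inferInstance
      have hSc : S.Countable := by
        have : S ⊆ Set.range (fun C : TopologicalSpace.Clopens Sig => (C : Set Sig)) :=
          fun s hs => ⟨⟨s, hS hs⟩, rfl⟩
        exact (Set.countable_range _).mono this
      rw [hS', Set.sUnion_eq_biUnion, Set.preimage_iUnion₂]
      rw [measure_biUnion_null_iff hSc]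
      intro s hs
      have := h s (hS hs) (hS' ▸ Set.subset_sUnion_of_mem hs)
      rwa [measureReal_eq_zero_iff] at this
    · intro h C hC hCZ
      rw [measureReal_eq_zero_iff]
      exact measure_mono_null (Set.preimage_mono hCZ) h

lemma exists_extreme {Y : Type*} [TopologicalSpace Y] [CompactSpace Y] [T2Space Y]
    [TotallyDisconnectedSpace Y] [SecondCountableTopology Y] [MeasurableSpace Y] [BorelSpace Y]
    [HasOuterApproxClosed Y]
    (K : Set (ProbabilityMeasure Y)) (hK : IsCompact K) (hne : K.Nonempty) {E : Set Y}
    (hE : IsClopen E) :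
    ∃ m ∈ K, (∀ m' ∈ K, (m' : Measure Y).real E ≤ (m : Measure Y).real E) ∧
      ∀ m₁ ∈ K, ∀ m₂ ∈ K, ∀ a b : ℝ, 0 < a → 0 < b → a + b = 1 →
        (∀ C, MeasurableSet C → (m : Measure Y).real C =
          a * (m₁ : Measure Y).real C + b * (m₂ : Measure Y).real C) →
        (m₁ : Measure Y) = m₂ := by
  have hc : Countable (TopologicalSpace.Clopens Y) :=
    TopologicalSpace.Clopens.countable_iff_secondCountable.2 inferInstance
  obtain ⟨w', hw0', c, hws', -⟩ := NNReal.exists_pos_sum_of_countable (ε := 1) (by simp)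
    (TopologicalSpace.Clopens Y)
  obtain ⟨w, hw0, hws⟩ : ∃ w : TopologicalSpace.Clopens Y → ℝ, (∀ C, 0 < w C) ∧ Summable w :=
    ⟨fun C => w' C, fun C => by exact_mod_cast hw0' C, by
      have := hws'.summable; exact_mod_cast this⟩
  obtain ⟨m₀, hm₀, hmax₀⟩ := hK.exists_isMaxOn hne (clopen_cont hE).continuousOn
  set K₀ : Set (ProbabilityMeasure Y) :=
    K ∩ {m | (m : Measure Y).real E = (m₀ : Measure Y).real E} with hK₀
  have hK₀c : IsCompact K₀ := hK.inter_right (isClosed_eq (clopen_cont hE) continuous_const)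
  have hbd : ∀ (C : TopologicalSpace.Clopens Y) (m : ProbabilityMeasure Y),
      ‖w C * (m : Measure Y).real C ^ 2‖ ≤ w C := by
    intro C m
    rw [Real.norm_of_nonneg (mul_nonneg (hw0 C).le (sq_nonneg _))]
    have h1 : (m : Measure Y).real C ≤ 1 := measureReal_le_one
    have h0 : 0 ≤ (m : Measure Y).real C := measureReal_nonneg
    have : (m : Measure Y).real C ^ 2 ≤ 1 := pow_le_one₀ h0 h1
    nlinarith [hw0 C]
  have hsum : ∀ m : ProbabilityMeasure Y,
      Summable (fun C : TopologicalSpace.Clopens Y => w C * (m : Measure Y).real C ^ 2) :=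
    fun m => Summable.of_norm_bounded hws (fun C => hbd C m)
  have hF : Continuous fun m : ProbabilityMeasure Y =>
      ∑' C : TopologicalSpace.Clopens Y, w C * (m : Measure Y).real C ^ 2 := by
    refine continuous_tsum (fun C => ?_) hws hbd
    exact continuous_const.mul ((clopen_cont C.isClopen).pow 2)
  obtain ⟨m, hm, hmax⟩ := hK₀c.exists_isMaxOn ⟨m₀, hm₀, rfl⟩ hF.continuousOn
  have hmE : (m : Measure Y).real E = (m₀ : Measure Y).real E := hm.2
  refine ⟨m, hm.1, fun m' hm' => ?_, ?_⟩
  · rw [hmE]; exact hmax₀ hm'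
  intro m₁ h₁ m₂ h₂ a b ha hb hab hC
  have e := hC E hE.isOpen.measurableSet
  have e1 : (m₁ : Measure Y).real E ≤ (m₀ : Measure Y).real E := hmax₀ h₁
  have e2 : (m₂ : Measure Y).real E ≤ (m₀ : Measure Y).real E := hmax₀ h₂
  rw [hmE] at e
  have hb' : b = 1 - a := by linarith
  have k1 : m₁ ∈ K₀ := ⟨h₁, by
    change (m₁ : Measure Y).real E = (m₀ : Measure Y).real E
    subst hb'; nlinarith⟩
  have k2 : m₂ ∈ K₀ := ⟨h₂, by
    change (m₂ : Measure Y).real E = (m₀ : Measure Y).real E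
    subst hb'; nlinarith⟩
  have f1 := hmax k1
  have f2 := hmax k2
  simp only [Set.mem_ofPred_eq] at f1 f2
  have hS := (((hsum m₁).hasSum.mul_left a).add ((hsum m₂).hasSum.mul_left b)).sub (hsum m).hasSum
  have hterm : ∀ C : TopologicalSpace.Clopens Y,
      a * (w C * (m₁ : Measure Y).real C ^ 2) + b * (w C * (m₂ : Measure Y).real C ^ 2)
        - w C * (m : Measure Y).real C ^ 2
      = a * b * w C * ((m₁ : Measure Y).real C - (m₂ : Measure Y).real C) ^ 2 := by
    intro C
    rw [hC C C.isClopen.isOpen.measurableSet, hb']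
    ring
  simp only [hterm] at hS
  have hnn : ∀ C : TopologicalSpace.Clopens Y,
      0 ≤ a * b * w C * ((m₁ : Measure Y).real C - (m₂ : Measure Y).real C) ^ 2 := fun C => by
    have := hw0 C; positivity
  have hle := hS.nonneg hnn
  have hS0 : HasSum (fun C : TopologicalSpace.Clopens Y =>
      a * b * w C * ((m₁ : Measure Y).real C - (m₂ : Measure Y).real C) ^ 2) 0 := by
    have hle2 := le_antisymm hle (by subst hb'; nlinarith)
    rw [hle2]
    exact hS
  have hz := (hasSum_zero_iff_of_nonneg hnn).1 hS0
  refine ext_clopen _ _ fun C hC => ?_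
  have := congrFun hz ⟨C, hC⟩
  have hw := hw0 ⟨C, hC⟩
  simp only [Pi.zero_apply, TopologicalSpace.Clopens.coe_mk] at this
  have h0 : a * b * w ⟨C, hC⟩ ≠ 0 := by positivity
  have := (mul_eq_zero.1 this).resolve_left h0
  linarith [pow_eq_zero_iff (two_ne_zero) |>.1 this]

open ProbabilityTheory in
/-- Conditioning a joining in `KK` on an invariant event of the second coordinate. -/
lemma cond_mem_KK {μ : Measure Sig} [IsProbabilityMeasure μ] (herg : Ergodic shift μ)
    {Z : Set Sig} (hZ : IsClosed Z) {m : ProbabilityMeasure Sig2} (hm : m ∈ KK μ Z)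
    {A : Set Sig2} (hA : MeasurableSet A) (hinv : TT ⁻¹' A = A)
    (h0 : (m : Measure Sig2) A ≠ 0) :
    ∃ m' ∈ KK μ Z, (m' : Measure Sig2) = (m : Measure Sig2)[|A] := by
  have ip : IsProbabilityMeasure ((m : Measure Sig2)[|A]) := cond_isProbabilityMeasure h0
  obtain ⟨m', hm'⟩ : ∃ m' : ProbabilityMeasure Sig2,
    (m' : Measure Sig2) = (m : Measure Sig2)[|A] := ⟨⟨_, ip⟩, rfl⟩
  refine ⟨m', ?_, hm'⟩
  obtain ⟨h1, h2, h3⟩ := (mem_KK hZ).1 hm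
  have hac : (m : Measure Sig2)[|A] ≪ m := cond_absolutelyContinuous
  have hT : ((m : Measure Sig2)[|A]).map TT = (m : Measure Sig2)[|A] := by
    ext C hC
    have hTm := continuous_TT.measurable
    rw [Measure.map_apply hTm hC, cond_apply hA, cond_apply hA]
    congr 1
    conv_lhs => rw [← hinv, ← Set.preimage_inter, ← Measure.map_apply hTm (hA.inter hC), h2]
  rw [mem_KK hZ, hm']
  refine ⟨?_, hT, hac h3⟩
  have i1 : IsProbabilityMeasure (((m : Measure Sig2)[|A]).map Prod.fst) :=
    Measure.isProbabilityMeasure_map (by fun_prop)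
  refine (herg.eq_of_absolutelyContinuous ?_ ?_)
  · refine ⟨continuous_shift.measurable, ?_⟩
    rw [Measure.map_map continuous_shift.measurable measurable_fst]
    conv_rhs => rw [← hT]
    rw [Measure.map_map measurable_fst continuous_TT.measurable]
    rfl
  · rw [← h1]
    exact hac.map measurable_fst

open ProbabilityTheory in
lemma exists_ergodic {μ : Measure Sig} [IsProbabilityMeasure μ] (herg : Ergodic shift μ)
    {Z : Set Sig} (hZ : IsClosed Z) (hne : (KK μ Z).Nonempty) :
    ∃ m ∈ KK μ Z, (∀ m' ∈ KK μ Z, (m' : Measure Sig2).real (agree 0) ≤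
      (m : Measure Sig2).real (agree 0)) ∧
      Ergodic shift ((m : Measure Sig2).map Prod.snd) := by
  obtain ⟨m, hm, hmax, hext⟩ := exists_extreme (KK μ Z) (KK_compact μ Z) hne (agree_clopen 0)
  refine ⟨m, hm, hmax, ?_⟩
  obtain ⟨h1, h2, h3⟩ := (mem_KK hZ).1 hm
  refine ⟨⟨continuous_shift.measurable, ?_⟩, ⟨?_⟩⟩
  · rw [Measure.map_map continuous_shift.measurable measurable_snd]
    conv_rhs => rw [← h2]
    rw [Measure.map_map measurable_snd continuous_TT.measurable]
    rfl
  intro B hB hBinv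
  set A : Set Sig2 := Prod.snd ⁻¹' B with hAdef
  have hA : MeasurableSet A := measurable_snd hB
  have hAinv : TT ⁻¹' A = A := by
    rw [hAdef, ← hBinv]
    rw [hBinv]
    ext p
    change shift p.2 ∈ B ↔ p.2 ∈ B
    conv_rhs => rw [← hBinv]
    rfl
  rw [eventuallyConst_set']
  by_contra hcon
  push Not at hcon
  obtain ⟨c1, c2⟩ := hcon
  have hA0 : (m : Measure Sig2) A ≠ 0 := by
    intro h
    apply c1
    rw [ae_eq_empty, Measure.map_apply measurable_snd hB]
    exact h
  have hA1 : (m : Measure Sig2) Aᶜ ≠ 0 := by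
    intro h
    apply c2
    rw [ae_eq_univ, Measure.map_apply measurable_snd hB.compl]
    exact h
  obtain ⟨m₁, hm₁, e₁⟩ := cond_mem_KK herg hZ hm hA hAinv hA0
  obtain ⟨m₂, hm₂, e₂⟩ := cond_mem_KK herg hZ hm hA.compl
    (by rw [Set.preimage_compl, hAinv]) hA1
  have := hext m₁ hm₁ m₂ hm₂ ((m : Measure Sig2).real A) ((m : Measure Sig2).real Aᶜ)
    (ENNReal.toReal_pos hA0 (by simp)) (ENNReal.toReal_pos hA1 (by simp))
    (by rw [probReal_compl_eq_one_sub hA]; ring) ?_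
  · have k1 : (m₁ : Measure Sig2) A = 1 := by rw [e₁]; exact cond_apply_self hA0 (by simp)
    have k2 : (m₂ : Measure Sig2) A = 0 := by
      rw [e₂, cond_apply hA.compl]; simp
    rw [this, k2] at k1
    exact zero_ne_one k1
  · intro C hC
    have hcr : ∀ B : Set Sig2, MeasurableSet B → ((m : Measure Sig2)[|B]).real C =
        ((m : Measure Sig2).real B)⁻¹ * (m : Measure Sig2).real (B ∩ C) := by
      intro B hB
      rw [measureReal_def, cond_apply hB, ENNReal.toReal_mul, ENNReal.toReal_inv]
      rfl
    rw [e₁, e₂, hcr _ hA, hcr _ hA.compl]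
    have p1 : (m : Measure Sig2).real A ≠ 0 := (ENNReal.toReal_pos hA0 (by simp)).ne'
    have p2 : (m : Measure Sig2).real Aᶜ ≠ 0 := (ENNReal.toReal_pos hA1 (by simp)).ne'
    rw [mul_inv_cancel_left₀ p1, mul_inv_cancel_left₀ p2, Set.inter_comm A, Set.inter_comm Aᶜ,
      ← Set.diff_eq, measureReal_inter_add_diff hA]

lemma phi_eq {z : Sig} {φ : Bool → ℤ → ℝ} (hφ1 : ∀ i : ℤ, φ (z i) i = 1)
    (hφ0 : ∀ i : ℤ, φ (!(z i)) i = 0) (b : Bool) (i : ℤ) :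
    φ b i = if b = z i then 1 else 0 := by
  split_ifs with h
  · rw [h, hφ1]
  · rw [← hφ0 i]; congr 1
    revert h; cases b <;> cases z i <;> simp

/-- Weighted Birkhoff sum at offset `k`. -/
def SS (φ : Bool → ℤ → ℝ) (n : ℕ) (x : Sig) (k : ℤ) : ℝ :=
  ∑ i ∈ Finset.range n, φ (x (i : ℤ)) ((i : ℤ) + k)

lemma SS_range_finite {z : Sig} {φ : Bool → ℤ → ℝ} (hφ : ∀ b i, φ b i = if b = z i then 1 else 0)
    (n : ℕ) (x : Sig) : (Set.range (SS φ n x)).Finite := by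
  refine Set.Finite.subset ((Set.finite_Iic n).image (fun j : ℕ => (j : ℝ))) ?_
  rintro _ ⟨k, rfl⟩
  refine ⟨((Finset.range n).filter fun i : ℕ => x i = z (i + k)).card, ?_, ?_⟩
  · exact (Finset.card_filter_le _ _).trans (by simp)
  · simp [SS, hφ]

lemma SS_le_birk {z : Sig} {φ : Bool → ℤ → ℝ} (hφ : ∀ b i, φ b i = if b = z i then 1 else 0)
    (n : ℕ) (x : Sig) (k : ℤ) : SS φ n x k ≤ birk φ n x :=
  le_ciSup (SS_range_finite hφ n x).bddAbove k

lemma birk_attained {z : Sig} {φ : Bool → ℤ → ℝ}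
    (hφ : ∀ b i, φ b i = if b = z i then 1 else 0) (n : ℕ) (x : Sig) :
    ∃ k, birk φ n x = SS φ n x k := by
  obtain ⟨k, hk⟩ := (Set.range_nonempty (SS φ n x)).csSup_mem (SS_range_finite hφ n x)
  exact ⟨k, hk.symm⟩

lemma exists_selector {z : Sig} {φ : Bool → ℤ → ℝ}
    (hφ : ∀ b i, φ b i = if b = z i then 1 else 0) (n : ℕ) :
    ∃ k : Sig → ℤ, Measurable k ∧ ∀ x, birk φ n x = SS φ n x (k x) := by
  choose K hK using birk_attained hφ n
  let r : Sig → (Fin n → Bool) := fun x i => x (i : ℕ)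
  let e : (Fin n → Bool) → Sig := fun w j =>
    if h : ∃ i : Fin n, ((i : ℕ) : ℤ) = j then w h.choose else false
  have hre : ∀ x (i : ℕ), i < n → e (r x) i = x i := by
    intro x i hi
    have h : ∃ i' : Fin n, ((i' : ℕ) : ℤ) = (i : ℤ) := ⟨⟨i, hi⟩, rfl⟩
    simp only [e, r, dif_pos h]
    rw [h.choose_spec]
  have hS : ∀ x k, SS φ n (e (r x)) k = SS φ n x k := by
    intro x k
    refine Finset.sum_congr rfl fun i hi => ?_
    rw [hre x i (Finset.mem_range.1 hi)]
  have hb : ∀ x, birk φ n (e (r x)) = birk φ n x := by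
    intro x
    exact congrArg iSup (funext (hS x))
  refine ⟨fun x => K (e (r x)), ?_, fun x => ?_⟩
  · have hr : Measurable r := by
      rw [measurable_pi_iff]; intro i; exact measurable_pi_apply _
    exact (Measurable.of_discrete (f := fun w => K (e w))).comp hr
  · rw [← hS x, ← hK, hb]

lemma birk_nonneg {z : Sig} {φ : Bool → ℤ → ℝ}
    (hφ : ∀ b i, φ b i = if b = z i then 1 else 0) (n : ℕ) (x : Sig) : 0 ≤ birk φ n x := by
  obtain ⟨k, hk⟩ := birk_attained hφ n x
  rw [hk]
  refine Finset.sum_nonneg fun i _ => ?_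
  rw [hφ]; split_ifs <;> simp

lemma birk_le {z : Sig} {φ : Bool → ℤ → ℝ}
    (hφ : ∀ b i, φ b i = if b = z i then 1 else 0) (n : ℕ) (x : Sig) : birk φ n x ≤ n := by
  obtain ⟨k, hk⟩ := birk_attained hφ n x
  rw [hk]
  refine (Finset.sum_le_card_nsmul _ _ 1 fun i _ => ?_).trans (by simp)
  rw [hφ]; split_ifs <;> simp

lemma measurable_hit {z : Sig} {k : Sig → ℤ} (hk : Measurable k) (i : ℤ) :
    MeasurableSet {x : Sig | x i = z (i + k x)} := by
  refine measurableSet_eq_fun (measurable_pi_apply i) ?_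
  exact (Measurable.of_discrete (f := fun j : ℤ => z (i + j))).comp hk

lemma SS_indicator {z : Sig} {φ : Bool → ℤ → ℝ}
    (hφ : ∀ b i, φ b i = if b = z i then 1 else 0) (n : ℕ) (k : Sig → ℤ) (x : Sig) :
    SS φ n x (k x) =
      ∑ i ∈ Finset.range n, {x : Sig | x i = z (i + k x)}.indicator (fun _ => (1 : ℝ)) x := by
  refine Finset.sum_congr rfl fun i _ => ?_
  rw [hφ, Set.indicator_apply]
  rfl

lemma measurable_birk {z : Sig} {φ : Bool → ℤ → ℝ}
    (hφ : ∀ b i, φ b i = if b = z i then 1 else 0) (n : ℕ) : Measurable (birk φ n) := by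
  obtain ⟨k, hk, h⟩ := exists_selector hφ n
  have : birk φ n = fun x => ∑ i ∈ Finset.range n,
      {x : Sig | x i = z (i + k x)}.indicator (fun _ => (1 : ℝ)) x := by
    funext x; rw [h, SS_indicator hφ]
  rw [this]
  exact Finset.measurable_sum _ fun i _ => measurable_const.indicator (measurable_hit hk i)

lemma Lam_le {z : Sig} {φ : Bool → ℤ → ℝ}
    (hφ : ∀ b i, φ b i = if b = z i then 1 else 0) (μ : Measure Sig) (n : ℕ) :
    Lam φ μ ≤ ((n : ℝ) + 1)⁻¹ * ∫ x, birk φ (n + 1) x ∂μ := by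
  refine ciInf_le ⟨0, ?_⟩ n
  rintro _ ⟨k, rfl⟩
  exact mul_nonneg (by positivity) (integral_nonneg fun x => birk_nonneg hφ _ x)

lemma le_Lam {z : Sig} {φ : Bool → ℤ → ℝ} {Z : Set Sig}
    (hdense : closure (Set.range fun n : ℤ => (fun j => z (j + n) : Sig)) = Z)
    (hφ : ∀ b i, φ b i = if b = z i then 1 else 0) {μ : Measure Sig}
    (m : Measure Sig2) [IsProbabilityMeasure m] (h1 : m.map Prod.fst = μ) (h2 : m.map TT = m)
    (h3 : m (Prod.snd ⁻¹' Zᶜ) = 0) : m.real (agree 0) ≤ Lam φ μ := by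
  refine le_ciInf fun n => ?_
  rw [inv_mul_eq_div, le_div_iff₀ (by positivity), ← h1,
    integral_map (by fun_prop) (measurable_birk hφ _).aestronglyMeasurable]
  have hT : MeasurePreserving TT m m := ⟨continuous_TT.measurable, h2⟩
  have hag : ∀ i : ℕ, m.real (agree i) = m.real (agree 0) := by
    intro i
    rw [← TT_iter_preimage_agree, (hT.iterate i).measureReal_preimage
      (agree_clopen 0).isOpen.measurableSet.nullMeasurableSet]
  have hms : ∀ i : ℤ, MeasurableSet (agree i) := fun i => (agree_clopen i).isOpen.measurableSet
  have hint : ∀ i : ℤ, Integrable ((agree i).indicator (fun _ => (1 : ℝ))) m :=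
    fun i => (integrable_const _).indicator (hms i)
  have e : m.real (agree 0) * ((n : ℝ) + 1) =
      ∫ p, ∑ i ∈ Finset.range (n + 1), (agree i).indicator (fun _ => (1 : ℝ)) p ∂m := by
    rw [integral_finsetSum _ fun (i : ℕ) _ => hint i]
    simp only [integral_indicator_const _ (hms _), hag]
    simp [mul_comm]
  rw [e]
  refine integral_mono_ae (integrable_finsetSum _ fun (i : ℕ) _ => hint i) ?_ ?_
  · refine Integrable.of_bound
      ((measurable_birk hφ (n + 1)).comp measurable_fst).aestronglyMeasurable
      ((n + 1 : ℕ) : ℝ) (Eventually.of_forall fun p => ?_)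
    rw [Real.norm_of_nonneg (birk_nonneg hφ _ _)]
    exact birk_le hφ _ _
  · have : ∀ᵐ p ∂m, p.2 ∈ Z := by
      rw [ae_iff]; exact h3
    filter_upwards [this] with p hp
    rw [← hdense, mem_closure_iff] at hp
    obtain ⟨y, hy, k, rfl⟩ := hp {y : Sig | ∀ i ∈ Finset.range (n + 1), y i = p.2 i} (by
        have : {y : Sig | ∀ i ∈ Finset.range (n + 1), y i = p.2 i} =
          ⋂ i ∈ Finset.range (n + 1), (fun y : Sig => y i) ⁻¹' {p.2 i} := by
          ext y; simp
        rw [this]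
        exact isOpen_biInter_finset fun i _ => (isOpen_discrete _).preimage (continuous_apply _))
      (fun i _ => rfl)
    refine le_trans (le_of_eq ?_) (SS_le_birk hφ (n + 1) p.1 k)
    refine Finset.sum_congr rfl fun i hi => ?_
    have := hy i hi
    simp only at this
    classical
    rw [hφ, this, Set.indicator_apply]
    congr 1

lemma exists_average {μ : Measure Sig} [IsProbabilityMeasure μ] {G : Sig → Sig2}
    (hG : Measurable G) (n : ℕ) :
    ∃ M : ProbabilityMeasure Sig2, ∀ C, MeasurableSet C → (M : Measure Sig2).real C =
      ((n : ℝ) + 1)⁻¹ * ∑ i ∈ Finset.range (n + 1), μ.real ((fun x => TT^[i] (G x)) ⁻¹' C) := by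
  have hm : ∀ i : ℕ, Measurable (fun x => TT^[i] (G x)) :=
    fun i => (continuous_TT.measurable.iterate i).comp hG
  let M : Measure Sig2 := ((n : ℝ≥0∞) + 1)⁻¹ •
    ∑ i ∈ Finset.range (n + 1), μ.map (fun x => TT^[i] (G x))
  have hM : ∀ C, MeasurableSet C → M C = ((n : ℝ≥0∞) + 1)⁻¹ *
      ∑ i ∈ Finset.range (n + 1), μ ((fun x => TT^[i] (G x)) ⁻¹' C) := by
    intro C hC
    simp only [M, Measure.smul_apply, Measure.finsetSum_apply, smul_eq_mul]
    congr 1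
    exact Finset.sum_congr rfl fun i _ => Measure.map_apply (hm i) hC
  have hp : IsProbabilityMeasure M := by
    constructor
    rw [hM _ MeasurableSet.univ]
    simp only [Set.preimage_univ, measure_univ, Finset.sum_const, Finset.card_range, nsmul_eq_mul,
      mul_one, Nat.cast_add, Nat.cast_one]
    exact ENNReal.inv_mul_cancel (by simp) (by finiteness)
  refine ⟨⟨M, hp⟩, fun C hC => ?_⟩
  change (M C).toReal = _
  rw [hM C hC, ENNReal.toReal_mul, ENNReal.toReal_inv, ENNReal.toReal_sum (by simp),
    ENNReal.toReal_add (by simp) (by simp)]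
  simp [measureReal_def]

lemma exists_joining {z : Sig} {φ : Bool → ℤ → ℝ} {Z : Set Sig}
    (hdense : closure (Set.range fun n : ℤ => (fun j => z (j + n) : Sig)) = Z)
    (hφ : ∀ b i, φ b i = if b = z i then 1 else 0) (μ : Measure Sig) [IsProbabilityMeasure μ]
    (hμ : MeasurePreserving shift μ μ) :
    ∃ m ∈ KK μ Z, Lam φ μ ≤ (m : Measure Sig2).real (agree 0) := by
  choose k hk hbk using fun n : ℕ => exists_selector hφ (n + 1)
  let G : ℕ → Sig → Sig2 := fun n x => (x, fun j => z (j + k n x))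
  have hG : ∀ n, Measurable (G n) := by
    intro n
    refine measurable_id.prodMk (measurable_pi_iff.2 fun j => ?_)
    exact (Measurable.of_discrete (f := fun i : ℤ => z (j + i))).comp (hk n)
  choose M hM using fun n : ℕ => exists_average (μ := μ) (hG n) n
  let U : Ultrafilter ℕ := Ultrafilter.of atTop
  have hU : (U : Filter ℕ) ≤ atTop := Ultrafilter.of_le atTop
  obtain ⟨m, hm⟩ : ∃ m, Tendsto M U (𝓝 m) :=
    ⟨(U.map M).lim, (U.map M).le_nhds_lim⟩
  have hlim : ∀ C : Set Sig2, IsClopen C → Tendsto (fun n => (M n : Measure Sig2).real C) U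
      (𝓝 ((m : Measure Sig2).real C)) := fun C hC =>
    ((clopen_cont hC).tendsto m).comp hm
  have hpos : ∀ n : ℕ, (n : ℝ) + 1 ≠ 0 := fun n => by positivity
  refine ⟨m, ⟨fun C hC => ?_, fun C hC => ?_, fun C hC hCZ => ?_⟩, ?_⟩
  · refine tendsto_nhds_unique (hlim _ (hC.preimage continuous_fst)) ?_
    refine tendsto_const_nhds.congr fun n => ?_
    rw [hM n _ (hC.preimage continuous_fst).isOpen.measurableSet]
    have : ∀ i : ℕ, μ.real ((fun x => TT^[i] (G n x)) ⁻¹' (Prod.fst ⁻¹' C)) = μ.real C := by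
      intro i
      rw [← (hμ.iterate i).measureReal_preimage hC.isOpen.measurableSet.nullMeasurableSet]
      congr 1
      ext x
      simp only [Set.mem_preimage, TT_iter, G]
    simp only [this, Finset.sum_const, Finset.card_range, nsmul_eq_mul]
    push_cast
    rw [inv_mul_cancel_left₀ (hpos n)]
  · have hdiff := (hlim _ (hC.preimage continuous_TT)).sub (hlim C hC)
    have h0 : Tendsto (fun n => (M n : Measure Sig2).real (TT ⁻¹' C) - (M n : Measure Sig2).real C)
        U (𝓝 0) := by
      have hinv : Tendsto (fun n : ℕ => ((n : ℝ) + 1)⁻¹) U (𝓝 0) :=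
        (tendsto_one_div_add_atTop_nhds_zero_nat (𝕜 := ℝ)).congr (fun n => one_div _) |>.mono_left hU
      refine squeeze_zero_norm (fun n => ?_) hinv
      rw [hM n _ (hC.preimage continuous_TT).isOpen.measurableSet, hM n _ hC.isOpen.measurableSet,
        ← mul_sub, ← Finset.sum_sub_distrib]
      have e : ∀ i : ℕ, (fun x => TT^[i] (G n x)) ⁻¹' (TT ⁻¹' C) =
          (fun x => TT^[i + 1] (G n x)) ⁻¹' C := by
        intro i; ext x
        simp only [Set.mem_preimage, Function.iterate_succ_apply']
      simp only [e]
      rw [Finset.sum_range_sub (fun i => μ.real ((fun x => TT^[i] (G n x)) ⁻¹' C))]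
      rw [norm_mul, Real.norm_of_nonneg (by positivity : (0 : ℝ) ≤ ((n : ℝ) + 1)⁻¹)]
      refine mul_le_of_le_one_right (by positivity) ?_
      rw [Real.norm_eq_abs, abs_le]
      constructor <;>
      linarith [measureReal_nonneg (μ := μ) (s := (fun x => TT^[n + 1] (G n x)) ⁻¹' C),
        measureReal_nonneg (μ := μ) (s := (fun x => TT^[0] (G n x)) ⁻¹' C),
        measureReal_le_one (μ := μ) (s := (fun x => TT^[n + 1] (G n x)) ⁻¹' C),
        measureReal_le_one (μ := μ) (s := (fun x => TT^[0] (G n x)) ⁻¹' C)]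
    exact sub_eq_zero.1 (tendsto_nhds_unique hdiff h0)
  · refine tendsto_nhds_unique (hlim _ (hC.preimage continuous_snd)) ?_
    refine tendsto_const_nhds.congr fun n => ?_
    rw [hM n _ (hC.preimage continuous_snd).isOpen.measurableSet]
    have : ∀ i : ℕ, (fun x => TT^[i] (G n x)) ⁻¹' (Prod.snd ⁻¹' C) = ∅ := by
      intro i
      ext x
      simp only [Set.mem_preimage, TT_iter, G, Set.mem_empty_iff_false, iff_false]
      intro hx
      refine hCZ hx ?_
      rw [← hdense]
      refine subset_closure ⟨i + k n x, ?_⟩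
      funext j
      rw [shift_iter]
      change z (j + (i + k n x)) = z (j + i + k n x)
      rw [add_assoc]
    simp only [this, measureReal_empty, Finset.sum_const_zero, mul_zero]
  · refine ge_of_tendsto (hlim _ (agree_clopen 0)) (Eventually.of_forall fun n => ?_)
    refine (Lam_le hφ μ n).trans (le_of_eq ?_)
    rw [hM n _ (agree_clopen 0).isOpen.measurableSet]
    congr 1
    simp only [hbk, SS_indicator hφ]
    rw [integral_finsetSum _ fun (i : ℕ) _ =>
      (integrable_const _).indicator (measurable_hit (hk n) i)]
    refine Finset.sum_congr rfl fun i _ => ?_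
    rw [integral_indicator_const _ (measurable_hit (hk n) i)]
    simp only [smul_eq_mul, mul_one]
    congr 1
    ext x
    simp [agree, TT_iter, shift_iter, G]

/-- Let `Z ⊆ Σ₂` be a nonempty compact shift-invariant set and `z ∈ Z` a point with dense
(two-sided) orbit.  If `φ (z i) i = 1` and `φ (1 - z i) i = 0` for all `i ∈ ℤ`, then for
every ergodic shift-invariant probability measure `μ` on `Σ₂`,
`Λ(φ,μ) = 1 − inf { d̄(μ,ν) : ν ergodic, ν Z = 1 }`. -/
theorem Lam_eq_one_sub_dbar
    (Z : Set Sig) (hZne : Z.Nonempty) (hZcpt : IsCompact Z) (hZinv : shift '' Z = Z)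
    (z : Sig) (hz : z ∈ Z)
    (hdense : closure (Set.range fun n : ℤ => (fun j => z (j + n) : Sig)) = Z)
    (φ : Bool → ℤ → ℝ)
    (hφ1 : ∀ i : ℤ, φ (z i) i = 1) (hφ0 : ∀ i : ℤ, φ (!(z i)) i = 0)
    (μ : Measure Sig) (hprob : IsProbabilityMeasure μ) (herg : Ergodic shift μ) :
    Lam φ μ = 1 - sInf {r : ℝ | ∃ ν : Measure Sig,
      IsProbabilityMeasure ν ∧ Ergodic shift ν ∧ ν Z = 1 ∧ r = dbar μ ν} := by
  have hφ := phi_eq hφ1 hφ0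
  have hZcl : IsClosed Z := hZcpt.isClosed
  have hne : ∀ m : Measure Sig2, IsProbabilityMeasure m →
      (m {p : Sig × Sig | p.1 0 ≠ p.2 0}).toReal = 1 - m.real (agree 0) := by
    intro m _
    rw [← probReal_compl_eq_one_sub (agree_clopen 0).isOpen.measurableSet]
    rfl
  have hlow : ∀ ν : Measure Sig, IsProbabilityMeasure ν → Ergodic shift ν → ν Z = 1 →
      1 - Lam φ μ ≤ dbar μ ν := by
    intro ν hν hνe hνZ
    refine le_csInf ?_ ?_
    · refine ⟨_, μ.prod ν, inferInstance, ?_, ?_, ?_, rfl⟩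
      · exact (herg.toMeasurePreserving.prod hνe.toMeasurePreserving).map_eq
      · simp
      · simp
    · rintro r ⟨m, hm, h2, h1, h3, rfl⟩
      rw [hne m hm]
      have := le_Lam hdense hφ m h1 h2 (by
        rw [← Measure.map_apply measurable_snd hZcl.measurableSet.compl, h3]
        exact (prob_compl_eq_zero_iff hZcl.measurableSet).2 hνZ)
      linarith
  obtain ⟨m₀, hm₀, hm₀L⟩ := exists_joining hdense hφ μ herg.toMeasurePreserving
  obtain ⟨m, hm, hmax, he⟩ := exists_ergodic herg hZcl ⟨m₀, hm₀⟩
  obtain ⟨h1, h2, h3⟩ := (mem_KK hZcl).1 hm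
  have hνp : IsProbabilityMeasure ((m : Measure Sig2).map Prod.snd) :=
    Measure.isProbabilityMeasure_map (by fun_prop)
  have hνZ : ((m : Measure Sig2).map Prod.snd) Z = 1 := by
    rw [← prob_compl_eq_zero_iff hZcl.measurableSet,
      Measure.map_apply measurable_snd hZcl.measurableSet.compl]
    exact h3
  have hle : dbar μ ((m : Measure Sig2).map Prod.snd) ≤ 1 - Lam φ μ := by
    refine le_trans (csInf_le ⟨0, ?_⟩ ⟨m, inferInstance, h2, h1, rfl, rfl⟩) ?_
    · rintro r ⟨m', -, -, -, -, rfl⟩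
      exact ENNReal.toReal_nonneg
    · rw [hne _ inferInstance]
      linarith [hmax m₀ hm₀]
  have hleast : IsLeast {r : ℝ | ∃ ν : Measure Sig,
      IsProbabilityMeasure ν ∧ Ergodic shift ν ∧ ν Z = 1 ∧ r = dbar μ ν} (1 - Lam φ μ) := by
    constructor
    · exact ⟨_, hνp, he, hνZ, le_antisymm (hlow _ hνp he hνZ) hle⟩
    · rintro r ⟨ν, a, b, c, rfl⟩
      exact hlow ν a b c
  rw [hleast.csInf_eq]
  ring
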